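/- Assume the continuum hypothesis (ℵ₁ = 2^{ℵ₀}). Then there exists a shift-invariant mean 𝔪 on ℕ — a linear functional on the space of bounded real sequences with 𝔪(1) = 1, 𝔪(x) ≥ 0 whenever x ≥ 0, and 𝔪((x_{n+1})_n) = 𝔪((x_n)_n) — with the following property: for every measurable space (Ω, 𝓑) and every uniformly bounded sequence (ψ_n) of 𝓑-measurable functions Ω → ℝ, the function ψ*(ω) := 𝔪((ψ_n(ω))_n) is universally measurable on (Ω, 𝓑), and for every probability measure λ on (Ω, 𝓑) one has ∫_Ω ψ* dλ = 𝔪((∫_Ω ψ_n dλ)_n). -/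

import Mathlib

/-!
The mean is built as a limit along ever finer blocks of convex combinations. Write `b ≺ a`
(`BlockOf b a`) if each tail of the sequence `a` has eventually all terms of `b` in its convex
hull. Convergence of a linear functional along `a` passes to every `b ≺ a`, with the same limit,
and a countable `≺`-chain has a lower bound by diagonalization
(`exists_blockOf_of_countable_chain`).

For a finite measure `μ` on `ℕ → ℝ` carried by a bounded set, the coordinates are bounded in
`L²(μ)`. Near-minimizers of the norm on the convex hulls of the tails are Cauchy, so every sequence
of weights below the Cesàro averages has a block whose weighted sums converge `μ`-almost
everywhere (`exists_blockOf_convAE`). There are at most `𝔠` finite measures, and under CH they can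
be well-ordered with countable initial segments, so a transfinite recursion gives a `≺`-chain
`F μ`, below the Cesàro averages, with convergence `μ`-a.e. along `F μ` for each `μ`
(`exists_chain_of_card_le`).

Let `m x` be the limit of the weighted sums of `x` along any `F μ` where it exists; point masses
show that it exists for bounded `x`, and the chain property that it is unique. Linearity and
positivity are immediate, and shift-invariance comes from the Cesàro averages. Given `ψ` and a
finite measure `λ` on `Ω`, take `μ` to be the image of `λ` under `p ↦ (ψ n p)ₙ`: then `ψ*` is
`λ`-a.e. a limit of measurable functions, and dominated convergence shows that `∫ ψ* dλ` is the
limit along `F μ` of the weighted sums of `(∫ ψ n dλ)ₙ`, that is `m` of this sequence.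
-/


open MeasureTheory Filter Topology

/-- A bounded real sequence. -/
def BddSeq (x : ℕ → ℝ) : Prop := ∃ C : ℝ, ∀ n, |x n| ≤ C

/-- A set is universally measurable if it is measurable with respect to the completion of
every finite measure, i.e. null-measurable for every finite measure. -/
def UniversallyMeasurableSet {Ω : Type*} [MeasurableSpace Ω] (s : Set Ω) : Prop :=
  ∀ (ν : Measure Ω), IsFiniteMeasure ν → NullMeasurableSet s ν

/-- A real-valued function is universally measurable if preimages of Borel (i.e. measurable)
sets of `ℝ` are universally measurable. -/
def UniversallyMeasurable {Ω : Type*} [MeasurableSpace Ω] (f : Ω → ℝ) : Prop :=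
  ∀ s : Set ℝ, MeasurableSet s → UniversallyMeasurableSet (f ⁻¹' s)

/-! ### Cardinality and transfinite recursion -/

open Cardinal in
/-- Under the stated cardinal bound every initial segment of a shortest well-order of `D` is
countable, so a recursion of length `ω₁` meets all requirements `Q d` along one chain. -/
theorem exists_chain_of_card_le {D S : Type} (hD : #D ≤ ℵ₁) (R : S → S → Prop)
    (hrefl : ∀ a, R a a) (htrans : ∀ a b c, R a b → R b c → R a c)
    (hlb : ∀ T : Set S, T.Countable → T.Nonempty → (∀ a ∈ T, ∀ b ∈ T, R a b ∨ R b a) →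
      ∃ c, ∀ a ∈ T, R c a)
    (a₀ : S) (Q : D → S → Prop) (hQ : ∀ d c, R c a₀ → ∃ b, R b c ∧ Q d b) :
    ∃ F : D → S, (∀ d, R (F d) a₀ ∧ Q d (F d)) ∧ ∀ d e, R (F d) (F e) ∨ R (F e) (F d) := by
  classical
  obtain ⟨_, _, hord⟩ := Cardinal.exists_ord_eq_type_lt D
  have hIio (d : D) : (Set.Iio d).Countable := by
    rw [← le_aleph0_iff_set_countable, ← lt_aleph_one_iff]
    exact (mk_Iio_lt d hord).trans_le hD
  have : Nonempty S := ⟨a₀⟩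
  let G : ∀ d : D, (∀ e, e < d → S) → S := fun d f =>
    Classical.epsilon fun b => R b a₀ ∧ Q d b ∧ ∀ e (h : e < d), R b (f e h)
  let F : D → S := (wellFounded_lt (α := D)).fix G
  have hF (d : D) : F d = Classical.epsilon fun b => R b a₀ ∧ Q d b ∧ ∀ e < d, R b (F e) :=
    WellFounded.fix_eq _ _ _
  have key (d : D) : R (F d) a₀ ∧ Q d (F d) ∧ ∀ e < d, R (F d) (F e) := by
    induction d using WellFoundedLT.induction with
    | ind d ih =>
      have hex : ∃ b, R b a₀ ∧ Q d b ∧ ∀ e < d, R b (F e) := by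
        obtain ⟨c, hc⟩ := hlb (insert a₀ (F '' Set.Iio d)) (((hIio d).image F).insert a₀)
          (Set.insert_nonempty _ _) (by
            rintro a (rfl | ⟨e, he, rfl⟩) b (rfl | ⟨e', he', rfl⟩)
            · exact Or.inl (hrefl _)
            · exact Or.inr (ih e' he').1
            · exact Or.inl (ih e he).1
            · rcases lt_trichotomy e e' with h | rfl | h
              · exact Or.inr ((ih e' he').2.2 e h)
              · exact Or.inl (hrefl _)
              · exact Or.inl ((ih e he).2.2 e' h))
        have hc0 := hc a₀ (Set.mem_insert _ _)
        obtain ⟨b, hbc, hb⟩ := hQ d c hc0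
        exact ⟨b, htrans _ _ _ hbc hc0, hb, fun e he => htrans _ _ _ hbc
          (hc _ (Set.mem_insert_of_mem _ ⟨e, he, rfl⟩))⟩
      rw [hF d]
      exact Classical.epsilon_spec hex
  refine ⟨F, fun d => ⟨(key d).1, (key d).2.1⟩, fun d e => ?_⟩
  rcases lt_trichotomy d e with h | rfl | h
  · exact Or.inr ((key e).2.2 d h)
  · exact Or.inl (hrefl _)
  · exact Or.inl ((key d).2.2 e h)

open Cardinal in
/-- A finite measure on a countably generated space is determined by its values on a countable
algebra of sets, so there are at most continuum many of them. -/
theorem mk_finiteMeasure_le_continuum (X : Type) [MeasurableSpace X]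
    [MeasurableSpace.CountablyGenerated X] :
    #{μ : Measure X // IsFiniteMeasure μ} ≤ 𝔠 := by
  obtain ⟨b, hbc, hb⟩ := ‹MeasurableSpace.CountablyGenerated X›.isCountablyGenerated
  set A := generateSetAlgebra b
  have hAc : A.Countable := countable_generateSetAlgebra hbc
  have hA : IsSetAlgebra A := isSetAlgebra_generateSetAlgebra
  obtain ⟨s, hs⟩ := hAc.exists_eq_range ⟨∅, hA.empty_mem⟩
  have hinj : Function.Injective
      (fun (μ : {μ : Measure X // IsFiniteMeasure μ}) (n : ℕ) => μ.1.real (s n)) := by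
    rintro ⟨μ, hμ⟩ ⟨ν, hν⟩ h
    have hval : ∀ t ∈ A, μ t = ν t := by
      intro t ht
      rw [hs] at ht
      obtain ⟨n, rfl⟩ := ht
      exact (measureReal_eq_measureReal_iff).1 (congrFun h n)
    refine Subtype.ext (ext_of_generate_finite A ?_ (fun u hu v hv _ => hA.inter_mem hu hv)
      hval (hval _ hA.univ_mem))
    rw [hb]
    exact generateFrom_generateSetAlgebra_eq.symm
  calc #{μ : Measure X // IsFiniteMeasure μ} ≤ #(ℕ → ℝ) := mk_le_of_injective hinj
    _ = 𝔠 := by simp [mk_real]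

/-! ### Block sequences of convex combinations -/

/-- The block relation: every tail of `a` has eventually all the terms of `b` in its convex
hull. -/
def BlockOf {V : Type*} [AddCommGroup V] [Module ℝ V] (b a : ℕ → V) : Prop :=
  ∀ N, ∀ᶠ n in atTop, b n ∈ convexHull ℝ (a '' Set.Ici N)

section Block

variable {V : Type*} [AddCommGroup V] [Module ℝ V]

theorem BlockOf.refl (a : ℕ → V) : BlockOf a a := fun N => by
  filter_upwards [eventually_ge_atTop N] with n hn
  exact subset_convexHull ℝ _ ⟨n, hn, rfl⟩

theorem BlockOf.eventually_mem {a b : ℕ → V} (h : BlockOf b a) {K : Set V} (hK : Convex ℝ K)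
    (ha : ∀ᶠ n in atTop, a n ∈ K) : ∀ᶠ n in atTop, b n ∈ K := by
  obtain ⟨N, hN⟩ := eventually_atTop.1 ha
  filter_upwards [h N] with n hn
  exact convexHull_min (Set.image_subset_iff.2 hN) hK hn

theorem BlockOf.trans {a b c : ℕ → V} (h : BlockOf c b) (h' : BlockOf b a) : BlockOf c a :=
  fun N => h.eventually_mem (convex_convexHull ℝ _) (h' N)

theorem BlockOf.tendsto {a b : ℕ → V} (h : BlockOf b a) (φ : V →ₗ[ℝ] ℝ) {l : ℝ}
    (ha : Tendsto (fun n => φ (a n)) atTop (𝓝 l)) :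
    Tendsto (fun n => φ (b n)) atTop (𝓝 l) := by
  rw [Metric.tendsto_nhds] at ha ⊢
  intro ε hε
  exact h.eventually_mem (K := φ ⁻¹' Metric.ball l ε)
    ((convex_ball l ε).linear_preimage φ) (ha ε hε)

/-- A diagonal sequence through a countable chain is a block of every member of the chain. -/
theorem exists_blockOf_of_countable_chain (T : Set (ℕ → V)) (hT : T.Countable)
    (hne : T.Nonempty) (hchain : ∀ a ∈ T, ∀ b ∈ T, BlockOf a b ∨ BlockOf b a) :
    ∃ c, ∀ a ∈ T, BlockOf c a := by
  obtain ⟨s, rfl⟩ := hT.exists_eq_range hne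
  have hmin (k : ℕ) : ∃ i, ∀ j ≤ k, BlockOf (s i) (s j) := by
    induction k with
    | zero => exact ⟨0, fun j hj => by rw [Nat.le_zero.1 hj]; exact BlockOf.refl _⟩
    | succ k ih =>
      obtain ⟨i, hi⟩ := ih
      rcases hchain (s i) ⟨i, rfl⟩ (s (k + 1)) ⟨_, rfl⟩ with h | h
      · refine ⟨i, fun j hj => ?_⟩
        rcases Nat.le_succ_iff.1 hj with hj | rfl
        · exact hi j hj
        · exact h
      · refine ⟨k + 1, fun j hj => ?_⟩
        rcases Nat.le_succ_iff.1 hj with hj | rfl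
        · exact h.trans (hi j hj)
        · exact BlockOf.refl _
  have hterm (k : ℕ) : ∃ v : V, ∀ j ≤ k, v ∈ convexHull ℝ (s j '' Set.Ici k) := by
    obtain ⟨i, hi⟩ := hmin k
    have : ∀ᶠ n in atTop, ∀ j ∈ Set.Iic k, s i n ∈ convexHull ℝ (s j '' Set.Ici k) :=
      (eventually_all_finite (Set.finite_Iic k)).2 fun j hj => hi j hj k
    obtain ⟨n, hn⟩ := this.exists
    exact ⟨s i n, hn⟩
  choose c hc using hterm
  refine ⟨c, ?_⟩
  rintro _ ⟨j, rfl⟩ N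
  filter_upwards [eventually_ge_atTop (max j N)] with k hk
  exact convexHull_mono (Set.image_mono (Set.Ici_subset_Ici.2 ((le_max_right _ _).trans hk)))
    (hc k j ((le_max_left _ _).trans hk))

/-- Near-minimizers of the norm on the convex hulls of the tails form a Cauchy sequence, by the
parallelogram law. -/
theorem exists_mem_convexHull_cauchySeq {H : Type*} [NormedAddCommGroup H]
    [InnerProductSpace ℝ H] (T : V →ₗ[ℝ] H) (a : ℕ → V) (C : ℝ)
    (hC : ∀ᶠ n in atTop, ‖T (a n)‖ ≤ C) :
    ∃ h : ℕ → V, (∀ n, h n ∈ convexHull ℝ (a '' Set.Ici n)) ∧ CauchySeq fun n => T (h n) := by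
  set K : ℕ → Set V := fun n => convexHull ℝ (a '' Set.Ici n) with hKdef
  have hKanti {m n : ℕ} (h : m ≤ n) : K n ⊆ K m :=
    convexHull_mono (Set.image_mono (Set.Ici_subset_Ici.2 h))
  have hane (n : ℕ) : a n ∈ K n := subset_convexHull ℝ _ ⟨n, Set.mem_Ici.2 le_rfl, rfl⟩
  set f : V → ℝ := fun v => ‖T v‖ ^ 2 with hf
  set δ : ℕ → ℝ := fun n => sInf (f '' K n) with hδ
  have hbdd (n : ℕ) : BddBelow (f '' K n) := ⟨0, by rintro _ ⟨v, -, rfl⟩; positivity⟩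
  have hδle {n : ℕ} {v : V} (hv : v ∈ K n) : δ n ≤ f v := csInf_le (hbdd n) ⟨v, hv, rfl⟩
  have hδmono : Monotone δ := fun m n h =>
    csInf_le_csInf (hbdd m) ⟨_, _, hane n, rfl⟩ (Set.image_mono (hKanti h))
  have hδbdd : BddAbove (Set.range δ) := by
    obtain ⟨N, hN⟩ := eventually_atTop.1 hC
    refine ⟨C ^ 2, ?_⟩
    rintro _ ⟨n, rfl⟩
    refine (hδle (hKanti (le_max_left n N) (hane _))).trans ?_
    exact pow_le_pow_left₀ (norm_nonneg _) (hN _ (le_max_right _ _)) 2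
  have hδlim := tendsto_atTop_ciSup hδmono hδbdd
  set L := ⨆ n, δ n
  have hex (n : ℕ) : ∃ v ∈ K n, f v < δ n + 1 / ((n : ℝ) + 1) := by
    have := exists_lt_of_csInf_lt (s := f '' K n) ⟨_, _, hane n, rfl⟩
      (b := δ n + 1 / ((n : ℝ) + 1)) (lt_add_of_pos_right _ (by positivity))
    obtain ⟨_, ⟨v, hv, rfl⟩, h⟩ := this
    exact ⟨v, hv, h⟩
  choose h hhK hhδ using hex
  refine ⟨h, hhK, ?_⟩
  have hdist {N n : ℕ} (hn : N ≤ n) :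
      ‖T (h n) - T (h N)‖ ^ 2 ≤ 4 * (L - δ N) + 4 * (1 / ((N : ℝ) + 1)) := by
    -- The midpoint of `h n` and `h N` lies in `K N`, which bounds the norm of the sum below.
    have hmid : (1 / 2 : ℝ) • h n + (1 / 2 : ℝ) • h N ∈ K N :=
      convex_convexHull ℝ _ (hKanti hn (hhK n)) (hhK N) (by norm_num) (by norm_num)
        (by norm_num)
    have h1 := hδle hmid
    have h2 : f ((1 / 2 : ℝ) • h n + (1 / 2 : ℝ) • h N) = ‖T (h n) + T (h N)‖ ^ 2 / 4 := by
      simp only [hf]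
      rw [← smul_add, map_smul, map_add, norm_smul, mul_pow]
      norm_num
      ring
    have h3 := parallelogram_law_with_norm ℝ (T (h n)) (T (h N))
    have h4 := hhδ n
    have h5 := hhδ N
    have h6 : δ n ≤ L := le_ciSup hδbdd n
    have h7 : 1 / ((n : ℝ) + 1) ≤ 1 / ((N : ℝ) + 1) := by
      gcongr
    have h8 : δ N ≤ L := le_ciSup hδbdd N
    rw [h2] at h1
    simp only [hf] at h4 h5
    nlinarith
  have hb : Tendsto (fun N : ℕ => 4 * (L - δ N) + 4 * (1 / ((N : ℝ) + 1))) atTop (𝓝 0) := by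
    have := ((tendsto_const_nhds (x := L)).sub hδlim).const_mul 4 |>.add
      ((tendsto_one_div_add_atTop_nhds_zero_nat (𝕜 := ℝ)).const_mul 4)
    simpa using this
  refine Metric.cauchySeq_iff'.2 fun ε hε => ?_
  obtain ⟨N, hN⟩ := (hb.eventually (gt_mem_nhds (show (0 : ℝ) < ε ^ 2 by positivity))).exists
  refine ⟨N, fun n hn => ?_⟩
  rw [dist_eq_norm]
  exact lt_of_pow_lt_pow_left₀ 2 hε.le ((hdist hn).trans_lt hN)

end Block

/-! ### Weights on `ℕ` and Cesàro averages -/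

/-- The finitely supported real weight functions on `ℕ`. -/
abbrev Wt : Type := ℕ →₀ ℝ

/-- The weighted sum `∑ i, w i * x i`, linear in `w`. -/
noncomputable abbrev ev (x : ℕ → ℝ) : Wt →ₗ[ℝ] ℝ := Finsupp.linearCombination ℝ x

/-- The probability weights: convex combinations of point masses. -/
def probWt : Set Wt := convexHull ℝ (Set.range fun i : ℕ => Finsupp.single i (1 : ℝ))

theorem map_mem_of_mem_probWt {E : Type*} [AddCommGroup E] [Module ℝ E] (φ : Wt →ₗ[ℝ] E)
    {K : Set E} (hK : Convex ℝ K) (h : ∀ i, φ (Finsupp.single i 1) ∈ K) {w : Wt}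
    (hw : w ∈ probWt) : φ w ∈ K :=
  convexHull_min (t := φ ⁻¹' K) (by rintro _ ⟨i, rfl⟩; exact h i) (hK.linear_preimage φ) hw

theorem ev_mem {x : ℕ → ℝ} {K : Set ℝ} (hK : Convex ℝ K) (h : ∀ i, x i ∈ K) {w : Wt}
    (hw : w ∈ probWt) : ev x w ∈ K :=
  map_mem_of_mem_probWt (ev x) hK (fun i => by simpa using h i) hw

theorem ev_add (x y : ℕ → ℝ) (w : Wt) : ev (x + y) w = ev x w + ev y w := by
  simp [Finsupp.linearCombination_apply, Finsupp.sum, mul_add, Finset.sum_add_distrib]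

theorem ev_smul (c : ℝ) (x : ℕ → ℝ) (w : Wt) : ev (c • x) w = c * ev x w := by
  simp [Finsupp.linearCombination_apply, Finsupp.sum, Finset.mul_sum, mul_left_comm]

theorem measurable_ev (w : Wt) : Measurable fun x : ℕ → ℝ => ev x w := by
  simp only [Finsupp.linearCombination_apply, Finsupp.sum]
  fun_prop

/-- The Cesàro weights, uniform on `{0, …, n}`. -/
noncomputable def cesaro (n : ℕ) : Wt :=
  ∑ i ∈ Finset.range (n + 1), (1 / ((n : ℝ) + 1)) • Finsupp.single i (1 : ℝ)

theorem cesaro_mem_probWt (n : ℕ) : cesaro n ∈ probWt := by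
  refine (convex_convexHull ℝ _).sum_mem (fun _ _ => by positivity) ?_
    (fun i _ => subset_convexHull ℝ _ ⟨i, rfl⟩)
  simp
  field_simp

theorem ev_cesaro (x : ℕ → ℝ) (n : ℕ) :
    ev x (cesaro n) = (1 / ((n : ℝ) + 1)) * ∑ i ∈ Finset.range (n + 1), x i := by
  simp [cesaro, map_sum, Finset.mul_sum]

theorem tendsto_ev_cesaro_shift {x : ℕ → ℝ} (hx : BddSeq x) :
    Tendsto (fun n => ev ((fun k => x (k + 1)) + (-1 : ℝ) • x) (cesaro n)) atTop (𝓝 0) := by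
  obtain ⟨C, hC⟩ := hx
  have h0 := (tendsto_one_div_add_atTop_nhds_zero_nat (𝕜 := ℝ)).mul_const (2 * C)
  rw [zero_mul] at h0
  refine squeeze_zero_norm (fun n => ?_) h0
  have : ev ((fun k => x (k + 1)) + (-1 : ℝ) • x) (cesaro n)
      = 1 / ((n : ℝ) + 1) * (x (n + 1) - x 0) := by
    rw [ev_cesaro, ← Finset.sum_range_sub x (n + 1)]
    simp [sub_eq_add_neg]
  rw [this, norm_mul, Real.norm_of_nonneg (by positivity)]
  gcongr
  have h1 := abs_le.1 (hC (n + 1))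
  have h2 := abs_le.1 (hC 0)
  rw [Real.norm_eq_abs, abs_le]
  constructor <;> linarith

/-! ### Almost everywhere convergent blocks -/

/-- Requirement attached to a measure `μ` of bounded support: the weighted sums converge
`μ`-almost everywhere. -/
def ConvAE (μ : Measure (ℕ → ℝ)) (b : ℕ → Wt) : Prop :=
  (∃ C : ℝ, ∀ᵐ x ∂μ, ∀ n, |x n| ≤ C) →
    ∀ᵐ x ∂μ, ∃ l, Tendsto (fun n => ev x (b n)) atTop (𝓝 l)

/-- Blocks converging in `L²(μ)` exist by the Hilbert space argument, and a subsequence of them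
converges almost everywhere. -/
theorem exists_blockOf_convAE (μ : Measure (ℕ → ℝ)) [IsFiniteMeasure μ] (c : ℕ → Wt)
    (hc : BlockOf c cesaro) : ∃ b, BlockOf b c ∧ ConvAE μ b := by
  by_cases hμ : ∃ C : ℝ, ∀ᵐ x ∂μ, ∀ n, |x n| ≤ C
  swap
  · exact ⟨c, BlockOf.refl c, fun h => absurd h hμ⟩
  obtain ⟨C, hC⟩ := hμ
  have hmem (i : ℕ) : MemLp (fun x : ℕ → ℝ => x i) 2 μ :=
    MemLp.of_bound (measurable_pi_apply i).aestronglyMeasurable C (hC.mono fun x hx => hx i)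
  let T : Wt →ₗ[ℝ] Lp ℝ 2 μ := Finsupp.linearCombination ℝ fun i => (hmem i).toLp _
  have hT (w : Wt) : T w =ᵐ[μ] fun x => ev x w := by
    induction w using Finsupp.induction_linear with
    | zero => simp only [map_zero]; exact Lp.coeFn_zero ℝ 2 μ
    | add f g hf hg =>
      rw [map_add]
      filter_upwards [Lp.coeFn_add (T f) (T g), hf, hg] with x h1 h2 h3
      rw [h1, Pi.add_apply, h2, h3, map_add]
    | single i r =>
      have : T (Finsupp.single i r) = r • (hmem i).toLp _ := by simp [T]
      rw [this]
      filter_upwards [Lp.coeFn_smul r ((hmem i).toLp _), (hmem i).coeFn_toLp] with x h1 h2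
      rw [h1, Pi.smul_apply, h2]
      simp
  obtain ⟨B, hB⟩ : ∃ B : ℝ, ∀ i, ‖(hmem i).toLp _‖ ≤ B :=
    ⟨_, fun i => Lp.norm_le_of_ae_bound (C := max C 0) (le_max_right _ _) (by
      filter_upwards [hC, (hmem i).coeFn_toLp] with x hx h2
      rw [h2]
      exact (hx i).trans (le_max_left _ _))⟩
  have hcP : ∀ᶠ n in atTop, c n ∈ probWt :=
    hc.eventually_mem (convex_convexHull ℝ _) (Eventually.of_forall cesaro_mem_probWt)
  have hbound : ∀ᶠ n in atTop, ‖T (c n)‖ ≤ B := hcP.mono fun n hn => by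
    have := map_mem_of_mem_probWt T (convex_closedBall (0 : Lp ℝ 2 μ) B)
      (fun i => by simpa [T] using hB i) hn
    simpa using this
  obtain ⟨h, hh, hcau⟩ := exists_mem_convexHull_cauchySeq T c B hbound
  obtain ⟨g, hg⟩ := cauchySeq_tendsto_of_complete hcau
  obtain ⟨ns, hns, hae⟩ := (tendstoInMeasure_of_tendsto_Lp hg).exists_seq_tendsto_ae
  refine ⟨fun n => h (ns n), fun N => ?_, fun _ => ?_⟩
  · filter_upwards [eventually_ge_atTop N] with n hn
    exact convexHull_mono (Set.image_mono (Set.Ici_subset_Ici.2 (hn.trans (hns.id_le n))))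
      (hh (ns n))
  · filter_upwards [hae, ae_all_iff.2 fun n => hT (h (ns n))] with x hx hx'
    exact ⟨g x, by simpa only [hx'] using hx⟩

/-! ### The mean -/

/-- Under CH one `BlockOf`-chain below the Cesàro averages serves all finite measures. -/
theorem exists_chain_of_CH (hCH : Cardinal.aleph.{0} 1 = 2 ^ Cardinal.aleph0) :
    ∃ F : {μ : Measure (ℕ → ℝ) // IsFiniteMeasure μ} → ℕ → Wt,
      (∀ μ, BlockOf (F μ) cesaro ∧ ConvAE μ.1 (F μ)) ∧
      ∀ μ ν, BlockOf (F μ) (F ν) ∨ BlockOf (F ν) (F μ) :=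
  exists_chain_of_card_le
    ((mk_finiteMeasure_le_continuum (ℕ → ℝ)).trans_eq (by
      rw [hCH, Cardinal.two_power_aleph0]))
    BlockOf BlockOf.refl (fun _ _ _ h h' => h.trans h') exists_blockOf_of_countable_chain
    cesaro (fun μ b => ConvAE μ.1 b) fun μ c hc => by
      have := μ.2
      exact exists_blockOf_convAE μ.1 c hc

/-- `x` has generalized limit `l` if its weighted sums tend to `l` along a member of `F`. -/
def GenLim {ι : Type*} (F : ι → ℕ → Wt) (x : ℕ → ℝ) (l : ℝ) : Prop :=
  ∃ i, Tendsto (fun n => ev x (F i n)) atTop (𝓝 l)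

/-- Two generalized limits are attained along a common member of a chain. -/
theorem GenLim.common {ι : Type*} {F : ι → ℕ → Wt}
    (hF : ∀ i j, BlockOf (F i) (F j) ∨ BlockOf (F j) (F i)) {x y : ℕ → ℝ} {l k : ℝ}
    (hx : GenLim F x l) (hy : GenLim F y k) :
    ∃ i, Tendsto (fun n => ev x (F i n)) atTop (𝓝 l) ∧
      Tendsto (fun n => ev y (F i n)) atTop (𝓝 k) := by
  obtain ⟨i, hi⟩ := hx
  obtain ⟨j, hj⟩ := hy
  rcases hF i j with h | h
  · exact ⟨i, hi, h.tendsto _ hj⟩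
  · exact ⟨j, h.tendsto _ hi, hj⟩

theorem abs_ev_le {x : ℕ → ℝ} {C : ℝ} (hC : ∀ n, |x n| ≤ C) {w : Wt} (hw : w ∈ probWt) :
    |ev x w| ≤ C := by
  have := ev_mem (convex_closedBall (0 : ℝ) C) (fun i => by simpa using hC i) hw
  simpa using this

theorem integral_ev {Ω : Type*} [MeasurableSpace Ω] (μ : Measure Ω) {ψ : ℕ → Ω → ℝ}
    (hψ : ∀ n, Integrable (ψ n) μ) (w : Wt) :
    ∫ p, ev (fun n => ψ n p) w ∂μ = ev (fun n => ∫ p, ψ n p ∂μ) w := by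
  simp only [Finsupp.linearCombination_apply, Finsupp.sum, smul_eq_mul]
  rw [integral_finsetSum _ fun i _ => (hψ i).const_mul _]
  simp only [integral_const_mul]

/-- CH, Mokobodzki: there is a shift-invariant mean `𝔪` on the bounded real
sequences such that for every uniformly bounded sequence `(ψ_n)` of measurable functions on
a measurable space `(Ω, 𝓑)`, the function `ψ* = 𝔪((ψ_n(·))_n)` is universally measurable
and `∫ ψ* dλ = 𝔪((∫ ψ_n dλ)_n)` for every probability measure `λ` on `(Ω, 𝓑)`. -/
theorem exists_mokobodzki_mean_of_CH
    (hCH : Cardinal.aleph 1 = 2 ^ Cardinal.aleph0) :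
    ∃ m : (ℕ → ℝ) → ℝ,
      -- linearity on bounded sequences
      (∀ x y : ℕ → ℝ, BddSeq x → BddSeq y → m (x + y) = m x + m y) ∧
      (∀ (c : ℝ) (x : ℕ → ℝ), BddSeq x → m (c • x) = c * m x) ∧
      -- it is a mean: normalized and positive
      m (fun _ => (1 : ℝ)) = 1 ∧
      (∀ x : ℕ → ℝ, BddSeq x → (∀ n, 0 ≤ x n) → 0 ≤ m x) ∧
      -- shift-invariance
      (∀ x : ℕ → ℝ, BddSeq x → m (fun n => x (n + 1)) = m x) ∧
      -- measure-linearity: the Mokobodzki property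
      (∀ (Ω : Type) (_ : MeasurableSpace Ω) (ψ : ℕ → Ω → ℝ),
        (∀ n, Measurable (ψ n)) → (∃ C : ℝ, ∀ n, ∀ p : Ω, |ψ n p| ≤ C) →
        UniversallyMeasurable (fun p : Ω => m (fun n => ψ n p)) ∧
        ∀ lam : Measure Ω, IsProbabilityMeasure lam →
          ∫ p, m (fun n => ψ n p) ∂lam = m (fun n => ∫ p, ψ n p ∂lam)) := by
  have hCH0 : Cardinal.aleph.{0} 1 = 2 ^ Cardinal.aleph0 := by
    apply Cardinal.lift_injective
    simpa using hCH
  obtain ⟨F, hF, hchain⟩ := exists_chain_of_CH hCH0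
  have hP (μ) : ∀ᶠ n in atTop, F μ n ∈ probWt :=
    (hF μ).1.eventually_mem (convex_convexHull ℝ _) (Eventually.of_forall cesaro_mem_probWt)
  have huniq {x : ℕ → ℝ} {l k : ℝ} (h : GenLim F x l) (h' : GenLim F x k) : l = k := by
    obtain ⟨i, h1, h2⟩ := h.common hchain h'
    exact tendsto_nhds_unique h1 h2
  have hexists {x : ℕ → ℝ} (hx : BddSeq x) : ∃ l, GenLim F x l := by
    obtain ⟨C, hC⟩ := hx
    let μ : {μ : Measure (ℕ → ℝ) // IsFiniteMeasure μ} := ⟨Measure.dirac x, inferInstance⟩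
    have h := (hF μ).2 ⟨C, by simpa [μ, ae_dirac_eq] using hC⟩
    have h' : ∃ l, Tendsto (fun n => ev x (F μ n)) atTop (𝓝 l) := by
      simpa [μ, ae_dirac_eq] using h
    obtain ⟨l, hl⟩ := h'
    exact ⟨l, μ, hl⟩
  let m : (ℕ → ℝ) → ℝ := fun x => Classical.epsilon (GenLim F x)
  have hm {x : ℕ → ℝ} {l : ℝ} (h : GenLim F x l) : m x = l :=
    huniq (Classical.epsilon_spec ⟨l, h⟩) h
  have hmb {x : ℕ → ℝ} (hx : BddSeq x) : GenLim F x (m x) :=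
    Classical.epsilon_spec (hexists hx)
  refine ⟨m, fun x y hx hy => ?_, fun c x hx => ?_, ?_, fun x hx h0 => ?_, fun x hx => ?_, ?_⟩
  · obtain ⟨i, h1, h2⟩ := (hmb hx).common hchain (hmb hy)
    exact hm ⟨i, by simpa only [ev_add] using h1.add h2⟩
  · obtain ⟨i, h1⟩ := hmb hx
    exact hm ⟨i, by simpa only [ev_smul] using h1.const_mul c⟩
  · obtain ⟨i, -⟩ := hmb (x := fun _ => 1) ⟨1, by simp⟩
    refine hm ⟨i, tendsto_const_nhds.congr' ?_⟩
    filter_upwards [hP i] with n hn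
    exact (ev_mem (convex_singleton (1 : ℝ)) (fun _ => rfl) hn).symm
  · obtain ⟨i, h1⟩ := hmb hx
    refine ge_of_tendsto h1 ?_
    filter_upwards [hP i] with n hn
    exact ev_mem (convex_Ici (0 : ℝ)) h0 hn
  · obtain ⟨i, h1⟩ := hmb hx
    -- The Cesàro averages of (shift of `x`) `- x` telescope and tend to `0`; so do their blocks.
    have h2 := (hF i).1.tendsto _ (tendsto_ev_cesaro_shift hx)
    refine hm ⟨i, ?_⟩
    have h3 := h2.add h1
    simp only [ev_add, ev_smul, zero_add] at h3
    refine h3.congr fun n => ?_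
    ring
  · intro Ω _ ψ hψ ⟨C, hC⟩
    have hΦ : Measurable fun p : Ω => fun n => ψ n p := measurable_pi_lambda _ hψ
    -- Every finite measure on `Ω` is transported to sequence space by `p ↦ (ψ n p)ₙ`.
    have key (ν : Measure Ω) (hν : IsFiniteMeasure ν) : ∃ i, ∀ᵐ p ∂ν,
        Tendsto (fun n => ev (fun k => ψ k p) (F i n)) atTop (𝓝 (m fun k => ψ k p)) := by
      let μ : {μ : Measure (ℕ → ℝ) // IsFiniteMeasure μ} :=
        ⟨ν.map fun p n => ψ n p, inferInstance⟩
      have hb : ∀ᵐ x ∂μ.1, ∀ n, |x n| ≤ C :=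
        ae_all_iff.2 fun n => (ae_map_iff hΦ.aemeasurable
          (measurableSet_le (measurable_pi_apply n).abs measurable_const)).2
          (Eventually.of_forall fun p => hC n p)
      refine ⟨μ, ?_⟩
      filter_upwards [ae_of_ae_map hΦ.aemeasurable ((hF μ).2 ⟨C, hb⟩)] with p ⟨l, hl⟩
      rwa [hm ⟨μ, hl⟩]
    have hmeas (w : Wt) : Measurable fun p => ev (fun k => ψ k p) w := (measurable_ev w).comp hΦ
    refine ⟨fun s hs ν hν => ?_, fun lam hlam => ?_⟩
    · obtain ⟨i, hi⟩ := key ν hν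
      have : AEMeasurable (fun p => m fun k => ψ k p) ν :=
        aemeasurable_of_tendsto_metrizable_ae atTop (fun n => (hmeas (F i n)).aemeasurable) hi
      exact this.nullMeasurable hs
    · obtain ⟨i, hi⟩ := key lam inferInstance
      have hint (n : ℕ) : Integrable (ψ n) lam :=
        Integrable.of_bound (hψ n).aestronglyMeasurable C (Eventually.of_forall fun p => hC n p)
      refine (hm ⟨i, ?_⟩).symm
      simp only [← integral_ev lam hint]
      refine tendsto_integral_filter_of_dominated_convergence (fun _ => C)
        (Eventually.of_forall fun n => (hmeas (F i n)).aestronglyMeasurable) ?_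
        (integrable_const C) hi
      filter_upwards [hP i] with n hn
      exact Eventually.of_forall fun p => abs_ev_le (fun k => hC k p) hn
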